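/- arXiv:2312.02057 — 2 statements merged into one kernel-verified Lean document; each statement's English description precedes it below -/
import Mathlib

section
/- Let $\Lambda \subseteq \mathbb{R}^n$ be a full-rank lattice with successive minima $\lambda_1 \leq \cdots \leq \lambda_n$ with respect to the $\ell_\infty$-norm. Then $\lambda_1 \cdots \lambda_n \leq \det(\Lambda)$; in particular, $\lambda_1 \leq \det(\Lambda)^{1/n}$. -/
/-- The `k`-th successive minimum (w.r.t. the `ℓ∞`-norm, which is the norm on
`Fin n → ℝ`) of the lattice generated by the matrix `A`. -/
noncomputable def succMin (n : ℕ) (A : Matrix (Fin n) (Fin n) ℝ) (k : ℕ) : ℝ :=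
  sInf {R : ℝ | 0 < R ∧ ∃ v : Fin k → Fin n → ℤ,
    LinearIndependent ℝ (fun j => A.mulVec fun i => ((v j i : ℝ))) ∧
    ∀ j, ‖A.mulVec fun i => ((v j i : ℝ))‖ ≤ R}

open MeasureTheory in
lemma shear_mp {n : ℕ} (j : Fin n) (h : (Fin n → ℝ) → ℝ) (hm : Measurable h)
    (hi : ∀ x y : Fin n → ℝ, (∀ i, i ≠ j → x i = y i) → h x = h y) :
    MeasurePreserving (fun x : Fin n → ℝ => Function.update x j (x j + h x)) volume volume := by
  obtain _ | n := n
  · exact j.elim0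
  have e := volume_preserving_piFinSuccAbove (fun _ : Fin (n+1) => ℝ) j
  have hsk : MeasurePreserving (fun p : (Fin n → ℝ) × ℝ => (p.1, p.2 + h (j.insertNth 0 p.1)))
      ((volume : Measure (Fin n → ℝ)).prod (volume : Measure ℝ))
      ((volume : Measure (Fin n → ℝ)).prod (volume : Measure ℝ)) := by
    refine MeasurePreserving.skew_product (g := fun a c => c + h (j.insertNth 0 a))
      (MeasurePreserving.id _) ?_ ?_
    · refine measurable_snd.add (hm.comp ?_)
      refine measurable_pi_iff.2 fun i => ?_
      refine Fin.succAboveCases j ?_ (fun i => ?_) i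
      · simp
      · simp only [Fin.insertNth_apply_succAbove]; fun_prop
    · exact Filter.Eventually.of_forall fun a => map_add_right_eq_self _ _
  have sw : MeasurePreserving (Prod.swap : ℝ × (Fin n → ℝ) → (Fin n → ℝ) × ℝ)
      (volume.prod volume) (volume.prod volume) := Measure.measurePreserving_swap
  have sw' : MeasurePreserving (Prod.swap : (Fin n → ℝ) × ℝ → ℝ × (Fin n → ℝ))
      (volume.prod volume) (volume.prod volume) := Measure.measurePreserving_swap
  have := (e.symm _).comp (sw'.comp (hsk.comp (sw.comp e)))
  convert! this using 1
  funext x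
  have hx : h x = h (j.insertNth 0 (j.removeNth x)) := by
    apply hi
    intro i hij
    obtain ⟨i, rfl⟩ := Fin.exists_succAbove_eq hij
    simp [Fin.removeNth]
  funext i
  simp only [Function.comp, MeasurableEquiv.piFinSuccAbove_symm_apply]
  refine Fin.succAboveCases j ?_ (fun i => ?_) i
  · simp [hx, MeasurableEquiv.piFinSuccAbove, Fin.insertNthEquiv]
  · simp [MeasurableEquiv.piFinSuccAbove, Fin.insertNthEquiv, Fin.removeNth]

open MeasureTheory in
lemma tri_mp {n : ℕ} (G : Fin n → (Fin n → ℝ) → ℝ) (hm : ∀ i, Measurable (G i))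
    (hi : ∀ (j : Fin n) (x y : Fin n → ℝ), (∀ i, j < i → x i = y i) → G j x = G j y) :
    MeasurePreserving (fun (x : Fin n → ℝ) i => x i + G i x) volume volume := by
  have key : ∀ m ≤ n, MeasurePreserving
      (fun (x : Fin n → ℝ) (i : Fin n) => if (i : ℕ) < m then x i + G i x else x i) volume volume := by
    intro m
    induction m with
    | zero => intro _; simp only [Nat.not_lt_zero, if_false]; exact MeasurePreserving.id _
    | succ m ih =>
      intro hmn
      have := (shear_mp ⟨m, hmn⟩ (G ⟨m, hmn⟩) (hm _)
        (fun x y hxy => hi _ _ _ fun i hij => hxy i hij.ne')).comp (ih (by omega))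
      convert! this using 1
      funext x i
      simp only [Function.comp]
      have hG : G ⟨m, hmn⟩ (fun (i : Fin n) => if (i : ℕ) < m then x i + G i x else x i)
          = G ⟨m, hmn⟩ x := by
        apply hi
        intro i hij
        have : ¬ (i : ℕ) < m := by
          have : m < (i : ℕ) := hij
          omega
        simp [this]
      rw [hG]
      by_cases him : i = ⟨m, hmn⟩
      · subst him; simp
      · rw [Function.update_of_ne him]
        have : (i : ℕ) ≠ m := fun h => him (Fin.ext h)
        have : (i : ℕ) < m + 1 ↔ (i : ℕ) < m := by omega
        simp [this]
  have := key n le_rfl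
  simpa using this

lemma sel {n : ℕ} (K : Set (Fin n → ℝ)) (hK : IsOpen K) (j : ℕ) :
    ∃ c : (Fin n → ℝ) → (Fin n → ℝ), Measurable c ∧
      (∀ x y : Fin n → ℝ, (∀ i : Fin n, j ≤ i → x i = y i) → c x = c y) ∧
      (∀ x ∈ K, c x ∈ K) ∧ ∀ x, ∀ i : Fin n, j ≤ i → c x i = x i := by
  classical
  let mg : (Fin n → ℝ) → (Fin n → ℝ) → (Fin n → ℝ) := fun q x i => if (i : ℕ) < j then q i else x i
  have hmg1 : ∀ q, Measurable (mg q) := by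
    intro q
    refine measurable_pi_iff.2 fun i => ?_
    by_cases h : (i : ℕ) < j
    · simp [mg, h]
    · simp only [mg, h, if_false]; fun_prop
  have hmg2 : ∀ x, Continuous (fun q => mg q x) := by
    intro x
    refine continuous_pi fun i => ?_
    by_cases h : (i : ℕ) < j
    · simp only [mg, h, if_true]; fun_prop
    · simp only [mg, h, if_false]; fun_prop
  have hmg3 : ∀ q x y, (∀ i : Fin n, j ≤ i → x i = y i) → mg q x = mg q y := by
    intro q x y h
    funext i
    by_cases hi : (i : ℕ) < j
    · simp [mg, hi]
    · simp [mg, hi, h i (by omega)]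
  let s := TopologicalSpace.denseSeq (Fin n → ℝ)
  let p : ℕ → (Fin n → ℝ) → Prop := fun m x => mg (s m) x ∈ K ∨ ∀ m', mg (s m') x ∉ K
  have hp : ∀ x, ∃ m, p m x := by
    intro x
    by_cases h : ∃ m, mg (s m) x ∈ K
    · obtain ⟨m, hm⟩ := h
      exact ⟨m, Or.inl hm⟩
    · exact ⟨0, Or.inr (by simpa using h)⟩
  refine ⟨fun x => mg (s (Nat.find (hp x))) x, ?_, ?_, ?_, ?_⟩
  · refine Measurable.find (f := fun m x => mg (s m) x) (fun m => hmg1 _) (fun m => ?_) hp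
    have h1 : ∀ m, MeasurableSet {x | mg (s m) x ∈ K} := fun m => hmg1 _ hK.measurableSet
    have : {x | p m x} = {x | mg (s m) x ∈ K} ∪ ⋂ m', {x | mg (s m') x ∈ K}ᶜ := by
      ext x; simp [p]
    rw [this]
    exact (h1 m).union (MeasurableSet.iInter fun m' => (h1 m').compl)
  · intro x y h
    have hpp : ∀ m, p m x ↔ p m y := by
      intro m
      simp only [p, fun q => hmg3 q x y h]
    have : Nat.find (hp x) = Nat.find (hp y) := by
      simp only [hpp]
    simp only [this]
    exact hmg3 _ _ _ h
  · intro x hx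
    rcases Nat.find_spec (hp x) with h | h
    · exact h
    · exfalso
      have ho : IsOpen {q | mg q x ∈ K} := hK.preimage (hmg2 x)
      have hne : {q | mg q x ∈ K}.Nonempty := ⟨x, by simpa [mg] using hx⟩
      obtain ⟨q, hq, m, rfl⟩ := (TopologicalSpace.denseRange_denseSeq (Fin n → ℝ)).inter_open_nonempty _ ho hne
      exact h m hq
  · intro x i hi
    simp [mg, show ¬ (i : ℕ) < j by omega]

open MeasureTheory in
lemma phi_exists {n : ℕ} (K : Set (Fin n → ℝ)) (hK : IsOpen K) (d : ℕ → ℝ)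
    (hl : ∀ i : Fin n, 0 < ∑ j ∈ Finset.range (i + 1), d j) :
    ∃ φ : (Fin n → ℝ) → (Fin n → ℝ), Measurable φ ∧
      (∀ x ∈ K, ∀ y ∈ K, x ≠ y → ∃ k : Fin n, φ x k ≠ φ y k ∧
        ∃ a b : ℕ → (Fin n → ℝ), (∀ j, a j ∈ K) ∧ (∀ j, b j ∈ K) ∧
          φ x - φ y = ∑ j ∈ Finset.range (k + 1), d j • (a j - b j)) ∧
      ∀ S, MeasurableSet S → K ⊆ φ ⁻¹' S →
        ENNReal.ofReal (∏ i : Fin n, ∑ j ∈ Finset.range (i + 1), d j) * volume K ≤ volume S := by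
  classical
  choose c hcm hcd hcK hce using fun j => sel K hK j
  set l : Fin n → ℝ := fun i => ∑ j ∈ Finset.range (i + 1), d j with hldef
  let φ : (Fin n → ℝ) → (Fin n → ℝ) := fun x => ∑ j ∈ Finset.range n, d j • c j x
  let G : Fin n → (Fin n → ℝ) → ℝ := fun i x =>
    (l i)⁻¹ * ∑ j ∈ Finset.Ico ((i : ℕ) + 1) n, d j * c j x i
  have hφ : ∀ x i, φ x i = l i * (x i + G i x) := by
    intro x i
    simp only [φ, G, Finset.sum_apply, Pi.smul_apply, smul_eq_mul]
    rw [mul_add, mul_inv_cancel_left₀ (hl i).ne',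
      ← Finset.sum_range_add_sum_Ico _ (show (i : ℕ) + 1 ≤ n from i.2), Finset.sum_mul]
    congr 1
    refine Finset.sum_congr rfl fun j hj => ?_
    rw [hce j x i (by simp at hj; omega)]
  have hGm : ∀ i, Measurable (G i) := by
    intro i
    refine Measurable.const_mul (Finset.measurable_sum _ fun j _ => ?_) _
    exact ((measurable_pi_apply i).comp (hcm j)).const_mul _
  have hGi : ∀ (j : Fin n) (x y : Fin n → ℝ), (∀ i, j < i → x i = y i) → G j x = G j y := by
    intro j x y h
    simp only [G]
    congr 1
    refine Finset.sum_congr rfl fun m hm => ?_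
    rw [hcd m x y fun i hi => h i (by simp at hm; rw [Fin.lt_def]; omega)]
  have hφm : Measurable φ := Finset.measurable_sum _ fun j _ => (hcm j).const_smul (d j)
  have hT := tri_mp G hGm hGi
  refine ⟨φ, hφm, ?_, ?_⟩
  · intro x hx y hy hxy
    have hne : (Finset.univ.filter fun i => x i ≠ y i).Nonempty := by
      obtain ⟨i, hi⟩ := Function.ne_iff.1 hxy
      exact ⟨i, by simpa using hi⟩
    obtain ⟨k, hk, hkm⟩ := Finset.exists_max_image _ id hne
    have hk' : x k ≠ y k := by simpa using hk
    have hgt : ∀ i, k < i → x i = y i := by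
      intro i hi
      by_contra h
      exact absurd (hkm i (by simpa using h)) (not_le.2 hi)
    refine ⟨k, ?_, fun j => c j x, fun j => c j y, fun j => hcK j x hx, fun j => hcK j y hy, ?_⟩
    · rw [hφ, hφ, hGi k x y hgt]
      intro h
      exact hk' (add_right_cancel (mul_left_cancel₀ (hl k).ne' h))
    · simp only [φ]
      rw [← Finset.sum_sub_distrib,
        ← Finset.sum_range_add_sum_Ico _ (show (k : ℕ) + 1 ≤ n from k.2)]
      rw [Finset.sum_eq_zero (s := Finset.Ico _ _), add_zero]
      · simp only [smul_sub]
      · intro j hj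
        rw [hcd j x y fun i hi => hgt i (by simp at hj; rw [Fin.lt_def]; omega), sub_self]
  · intro S hS hKS
    set D : Matrix (Fin n) (Fin n) ℝ := Matrix.diagonal l with hD
    have hdet : LinearMap.det (Matrix.toLin' D) = ∏ i, l i := by
      rw [LinearMap.det_toLin', hD, Matrix.det_diagonal]
    have hpos : 0 < ∏ i, l i := Finset.prod_pos fun i _ => hl i
    have h1 : φ ⁻¹' S = (fun (x : Fin n → ℝ) i => x i + G i x) ⁻¹' (Matrix.toLin' D ⁻¹' S) := by
      have : φ = fun x => Matrix.toLin' D (fun i => x i + G i x) := by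
        funext x i
        rw [hφ, hD]
        simp [Matrix.mulVec_diagonal]
      rw [this]; rfl
    have hms : MeasurableSet (Matrix.toLin' D ⁻¹' S) :=
      (LinearMap.continuous_of_finiteDimensional (Matrix.toLin' D)).measurable hS
    have h2 : volume (φ ⁻¹' S) = ENNReal.ofReal (∏ i, l i)⁻¹ * volume S := by
      rw [h1, hT.measure_preimage hms.nullMeasurableSet,
        Measure.addHaar_preimage_linearMap _ (by rw [hdet]; exact hpos.ne'), hdet,
        abs_of_pos (inv_pos.2 hpos)]
    calc ENNReal.ofReal (∏ i, l i) * volume K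
        ≤ ENNReal.ofReal (∏ i, l i) * volume (φ ⁻¹' S) := by gcongr
      _ = volume S := by
        rw [h2, ← mul_assoc, ← ENNReal.ofReal_mul hpos.le, mul_inv_cancel₀ hpos.ne']
        simp

lemma greedy {V : Type*} [AddCommGroup V] [Module ℝ V] [FiniteDimensional ℝ V] (n : ℕ)
    (P : ℕ → Submodule ℝ V) (h : ∀ m < n, m < Module.finrank ℝ (P m)) :
    ∃ g : Fin n → V, LinearIndependent ℝ g ∧ ∀ i : Fin n, g i ∈ P i := by
  induction n with
  | zero => exact ⟨Fin.elim0, linearIndependent_empty_type, fun i => i.elim0⟩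
  | succ n ih =>
    obtain ⟨g, hg, hgP⟩ := ih fun m hm => h m (by omega)
    have hnot : ¬ P n ≤ Submodule.span ℝ (Set.range g) := by
      intro hle
      have h1 := Submodule.finrank_mono hle
      rw [finrank_span_eq_card hg, Fintype.card_fin] at h1
      have := h n (by omega)
      omega
    obtain ⟨x, hx, hxn⟩ := SetLike.not_le_iff_exists.1 hnot
    refine ⟨Fin.snoc g x, linearIndependent_finSnoc.2 ⟨hg, hxn⟩, fun i => ?_⟩
    refine Fin.lastCases ?_ (fun i => ?_) i
    · simpa using hx
    · simpa using hgP i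

lemma succMin_nonneg (n : ℕ) (A : Matrix (Fin n) (Fin n) ℝ) (k : ℕ) : 0 ≤ succMin n A k :=
  Real.sInf_nonneg fun _ hR => hR.1.le

lemma succMin_mono (n : ℕ) (A : Matrix (Fin n) (Fin n) ℝ) (hA : IsUnit A.det) (k l : ℕ)
    (hkl : k ≤ l) (hln : l ≤ n) : succMin n A k ≤ succMin n A l := by
  unfold succMin
  refine csInf_le_csInf ⟨0, fun _ hR => hR.1.le⟩ ?_ ?_
  · have hcol : LinearIndependent ℝ A.col :=
      Matrix.linearIndependent_cols_iff_isUnit.2 ((Matrix.isUnit_iff_isUnit_det A).2 hA)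
    have he : (fun j : Fin l => A.mulVec fun i => (((Pi.single (Fin.castLE hln j) 1 : Fin n → ℤ) i : ℤ) : ℝ))
        = A.col ∘ Fin.castLE hln := by
      funext j
      have : (fun i => (((Pi.single (Fin.castLE hln j) 1 : Fin n → ℤ) i : ℤ) : ℝ))
        = Pi.single (Fin.castLE hln j) 1 := by
        funext i
        simp [Pi.single_apply]
      rw [this, Matrix.mulVec_single_one]; rfl
    refine ⟨1 + ∑ j : Fin l, ‖(A.col ∘ Fin.castLE hln) j‖, by positivity,
      fun j => Pi.single (Fin.castLE hln j) 1, ?_, fun j => ?_⟩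
    · rw [he]
      exact hcol.comp _ (Fin.castLE_injective hln)
    · have := congrFun he j
      rw [this]
      have := Finset.single_le_sum (f := fun j => ‖(A.col ∘ Fin.castLE hln) j‖)
        (fun i _ => norm_nonneg _) (Finset.mem_univ j)
      linarith
  · rintro R ⟨hR, v, hv, hvR⟩
    exact ⟨hR, fun j => v (Fin.castLE hkl j), hv.comp _ (Fin.castLE_injective hkl), fun j => hvR _⟩

lemma finrank_short (n : ℕ) (A : Matrix (Fin n) (Fin n) ℝ) (k : ℕ) :
    Module.finrank ℝ (Submodule.span ℝ {w : Fin n → ℝ | ∃ z : Fin n → ℤ,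
      w = A.mulVec (fun i => (z i : ℝ)) ∧ ‖w‖ < succMin n A (k + 1)}) ≤ k := by
  by_contra hcon
  push Not at hcon
  set s := {w : Fin n → ℝ | ∃ z : Fin n → ℤ,
      w = A.mulVec (fun i => (z i : ℝ)) ∧ ‖w‖ < succMin n A (k + 1)} with hs
  obtain ⟨f, hf, -, hfl⟩ := Submodule.exists_fun_fin_finrank_span_eq ℝ s
  let g : Fin (k + 1) → (Fin n → ℝ) := fun j => f (Fin.castLE hcon j)
  have hg : ∀ j, g j ∈ s := fun j => hf _
  have hgl : LinearIndependent ℝ g := hfl.comp _ (Fin.castLE_injective hcon)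
  choose z hz hzl using hg
  obtain ⟨j0, -, hj0⟩ := Finset.exists_max_image Finset.univ (fun j => ‖g j‖) ⟨0, Finset.mem_univ _⟩
  have hmem : ‖g j0‖ ∈ {R : ℝ | 0 < R ∧ ∃ v : Fin (k + 1) → Fin n → ℤ,
    LinearIndependent ℝ (fun j => A.mulVec fun i => ((v j i : ℝ))) ∧
    ∀ j, ‖A.mulVec fun i => ((v j i : ℝ))‖ ≤ R} := by
    refine ⟨norm_pos_iff.2 (hgl.ne_zero j0), z, ?_, fun j => ?_⟩
    · have : (fun j => A.mulVec fun i => ((z j i : ℝ))) = g := by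
        funext j; exact (hz j).symm
      rw [this]; exact hgl
    · rw [← hz]; exact hj0 j (Finset.mem_univ _)
  have := csInf_le ⟨0, fun _ hR => hR.1.le⟩ hmem
  exact absurd (hzl j0) (not_lt.2 this)

lemma exists_C (n : ℕ) (A : Matrix (Fin n) (Fin n) ℝ) :
    ∃ C : Matrix (Fin n) (Fin n) ℝ, IsUnit C.det ∧ ∀ (k : Fin n) (z : Fin n → ℤ),
      ‖A.mulVec (fun i => (z i : ℝ))‖ < succMin n A (k + 1) →
        C.mulVec (A.mulVec (fun i => (z i : ℝ))) k = 0 := by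
  let W : ℕ → Submodule ℝ (Fin n → ℝ) := fun k => Submodule.span ℝ {w : Fin n → ℝ | ∃ z : Fin n → ℤ,
      w = A.mulVec (fun i => (z i : ℝ)) ∧ ‖w‖ < succMin n A (k + 1)}
  have hW : ∀ k, Module.finrank ℝ (W k) ≤ k := finrank_short n A
  let e := dotProductEquiv ℝ (Fin n)
  let P : ℕ → Submodule ℝ (Fin n → ℝ) := fun m =>
    (W (n - 1 - m)).dualAnnihilator.map (e.symm : Module.Dual ℝ (Fin n → ℝ) →ₗ[ℝ] (Fin n → ℝ))
  have hP : ∀ m < n, m < Module.finrank ℝ (P m) := by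
    intro m hm
    have h1 : Module.finrank ℝ (P m) = Module.finrank ℝ (W (n - 1 - m)).dualAnnihilator :=
      LinearEquiv.finrank_map_eq e.symm _
    have h2 := Subspace.finrank_add_finrank_dualAnnihilator_eq (W (n - 1 - m))
    have h3 := hW (n - 1 - m)
    rw [Module.finrank_fin_fun] at h2
    omega
  obtain ⟨g, hg, hgP⟩ := greedy n P hP
  let C : Matrix (Fin n) (Fin n) ℝ := Matrix.of fun k => g k.rev
  refine ⟨C, ?_, ?_⟩
  · rw [← Matrix.isUnit_iff_isUnit_det, ← Matrix.linearIndependent_rows_iff_isUnit]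
    exact hg.comp _ Fin.rev_injective
  · intro k z hz
    obtain ⟨f, hf, hfe⟩ := hgP k.rev
    have hk : n - 1 - (k.rev : ℕ) = k := by rw [Fin.val_rev]; omega
    rw [hk] at hf
    have hfz := (Submodule.mem_dualAnnihilator f).1 hf _ (Submodule.subset_span ⟨z, rfl, hz⟩)
    have hfe' : f = e (g k.rev) := by rw [← hfe]; simp
    rw [hfe'] at hfz
    simpa [e, C, Matrix.mulVec] using hfz

open MeasureTheory in
lemma prod_le (n : ℕ) (A : Matrix (Fin n) (Fin n) ℝ) (hA : IsUnit A.det)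
    (hpos : ∀ i : Fin n, 0 < succMin n A (i + 1)) :
    (∏ i : Fin n, succMin n A (i + 1)) ≤ |A.det| := by
  classical
  obtain ⟨C, hC, hCz⟩ := exists_C n A
  set B := C⁻¹ with hB
  have hBC : B * C = 1 := Matrix.nonsing_inv_mul C hC
  have hBdet : B.det = C.det⁻¹ := by rw [hB, Matrix.det_nonsing_inv, Ring.inverse_eq_inv']
  have hC0 : C.det ≠ 0 := hC.ne_zero
  let d : ℕ → ℝ := fun j => if j = 0 then succMin n A 1 else succMin n A (j + 1) - succMin n A j
  have hd : ∀ i : ℕ, ∑ j ∈ Finset.range (i + 1), d j = succMin n A (i + 1) := by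
    intro i
    induction i with
    | zero => simp [d]
    | succ i ih => rw [Finset.sum_range_succ, ih]; simp [d]
  have hd0 : ∀ j < n, 0 ≤ d j := by
    intro j hj
    by_cases h : j = 0
    · simp only [d, h, if_true]; exact succMin_nonneg _ _ _
    · simp only [d, h, if_false]
      exact sub_nonneg.2 (succMin_mono n A hA _ _ (by omega) (by omega))
  let K : Set (Fin n → ℝ) := Matrix.toLin' B ⁻¹' Metric.ball 0 1
  have hK : IsOpen K :=
    Metric.isOpen_ball.preimage (LinearMap.continuous_of_finiteDimensional _)
  have hKn : ∀ x ∈ K, ‖B.mulVec x‖ < 1 := by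
    intro x hx
    simpa [K] using hx
  obtain ⟨φ, hφm, hφ, hvol⟩ := phi_exists K hK d (fun i => by rw [hd]; exact hpos i)
  simp only [hd] at hvol
  -- key injectivity
  have key : ∀ x ∈ K, ∀ y ∈ K, ∀ z : Fin n → ℤ,
      φ x - φ y = C.mulVec ((2 : ℝ) • A.mulVec (fun i => (z i : ℝ))) → x = y := by
    intro x hx y hy z hz
    by_contra hxy
    obtain ⟨k, hk, a, b, ha, hb, hab⟩ := hφ x hx y hy hxy
    apply hk
    have hnorm : ‖B.mulVec (φ x - φ y)‖ < 2 * succMin n A (k + 1) := by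
      rw [hab, Matrix.mulVec_sum]
      refine (norm_sum_le _ _).trans_lt ?_
      rw [← hd, Finset.mul_sum]
      have hlt : ∀ j, ‖B.mulVec (a j - b j)‖ < 2 := by
        intro j
        rw [Matrix.mulVec_sub]
        have := norm_sub_le (B.mulVec (a j)) (B.mulVec (b j))
        have := hKn _ (ha j)
        have := hKn _ (hb j)
        linarith
      have hterm : ∀ j ∈ Finset.range ((k : ℕ) + 1), ‖B.mulVec (d j • (a j - b j))‖
          = d j * ‖B.mulVec (a j - b j)‖ := by
        intro j hj
        rw [Matrix.mulVec_smul, norm_smul, Real.norm_of_nonneg (hd0 j (by simp at hj; omega))]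
      refine Finset.sum_lt_sum ?_ ⟨0, by simp, ?_⟩
      · intro j hj
        rw [hterm j hj, mul_comm]
        exact mul_le_mul_of_nonneg_right (hlt j).le (hd0 j (by simp at hj; omega))
      · rw [hterm 0 (by simp), mul_comm]
        have : 0 < d 0 := by
          simp only [d, if_true]
          exact hpos ⟨0, k.pos⟩
        exact mul_lt_mul_of_pos_right (hlt 0) this
    rw [hz, Matrix.mulVec_mulVec, hBC, Matrix.one_mulVec, norm_smul] at hnorm
    have h0 := hCz k z (by norm_num at hnorm; exact hnorm)
    have := congrFun hz k
    rw [Matrix.mulVec_smul, Pi.smul_apply, h0, smul_zero, Pi.sub_apply] at this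
    linarith
  -- lattice
  set M : Matrix (Fin n) (Fin n) ℝ := (2 : ℝ) • (C * A) with hM
  have hMdet : M.det = 2 ^ n * (C.det * A.det) := by
    rw [hM, Matrix.det_smul, Matrix.det_mul, Fintype.card_fin]
  have hMu : IsUnit M.det := by
    rw [hMdet]
    exact (isUnit_iff_ne_zero.2 (by positivity)).mul (hC.mul hA)
  let b : Module.Basis (Fin n) ℝ (Fin n → ℝ) :=
    (Pi.basisFun ℝ (Fin n)).map (Matrix.toLinearEquiv' M (Matrix.invertibleOfIsUnitDet M hMu))
  have hb : ∀ i, b i = M.col i := by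
    intro i
    simp only [b, Module.Basis.map_apply, Pi.basisFun_apply]
    exact Matrix.mulVec_single_one M i
  have hbof : (Matrix.of b : Matrix (Fin n) (Fin n) ℝ) = M.transpose := by
    ext i j
    rw [Matrix.of_apply, hb]; rfl
  have hF : volume (ZSpan.fundamentalDomain b) = ENNReal.ofReal |M.det| := by
    rw [ZSpan.volume_fundamentalDomain, hbof, Matrix.det_transpose]
  have hlat : ∀ w ∈ Submodule.span ℤ (Set.range b), ∃ z : Fin n → ℤ,
      w = C.mulVec ((2 : ℝ) • A.mulVec (fun i => (z i : ℝ))) := by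
    intro w hw
    choose z hz using (b.mem_span_iff_repr_mem ℤ w).1 hw
    refine ⟨z, ?_⟩
    have h1 : w = M.mulVec (fun i => (z i : ℝ)) := by
      rw [← b.sum_repr w, Matrix.mulVec_eq_sum]
      refine Finset.sum_congr rfl fun i _ => ?_
      rw [← hz, hb]
      rw [op_smul_eq_smul]
      rfl
    rw [h1, hM, Matrix.smul_mulVec, Matrix.mulVec_smul, Matrix.mulVec_mulVec]
  have hinj : Set.InjOn φ K := by
    intro x hx y hy hxy
    apply key x hx y hy 0
    have : (fun i : Fin n => (((0 : Fin n → ℤ) i : ℤ) : ℝ)) = 0 := by funext i; simp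
    rw [this]
    simp [hxy]
  have hT : MeasurableSet (φ '' K) := hK.measurableSet.image_of_measurable_injOn hφm hinj
  have hle : volume (φ '' K) ≤ volume (ZSpan.fundamentalDomain b) := by
    by_contra hlt
    push Not at hlt
    haveI : Countable (Submodule.span ℤ (Set.range b)).toAddSubgroup :=
      inferInstanceAs (Countable (Submodule.span ℤ (Set.range b)))
    obtain ⟨u, v, huv, hdis⟩ := exists_pair_mem_lattice_not_disjoint_vadd
      (ZSpan.isAddFundamentalDomain' b volume) hT.nullMeasurableSet hlt
    obtain ⟨w, ⟨_, ⟨x, hx, rfl⟩, hxw⟩, ⟨_, ⟨y, hy, rfl⟩, hyw⟩⟩ := Set.not_disjoint_iff.1 hdis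
    have hxw' : (u : Fin n → ℝ) + φ x = w := hxw
    have hyw' : (v : Fin n → ℝ) + φ y = w := hyw
    have hsub : φ x - φ y = ((v - u : (Submodule.span ℤ (Set.range b)).toAddSubgroup) : Fin n → ℝ) := by
      have : (u : Fin n → ℝ) + φ x = v + φ y := hxw'.trans hyw'.symm
      rw [AddSubgroup.coe_sub, sub_eq_sub_iff_add_eq_add, add_comm, this]
    obtain ⟨z, hz⟩ := hlat _ (v - u).2
    have hxy := key x hx y hy z (hsub.trans hz)
    subst hxy
    rw [sub_self] at hsub
    exact huv (sub_eq_zero.1 (Subtype.ext hsub.symm)).symm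
  have hKvol : volume K = ENNReal.ofReal (|C.det| * 2 ^ n) := by
    have hdet : LinearMap.det (Matrix.toLin' B) = C.det⁻¹ := by
      rw [LinearMap.det_toLin', hBdet]
    rw [Measure.addHaar_preimage_linearMap _ (by rw [hdet]; exact inv_ne_zero hC0), hdet, inv_inv,
      Real.volume_pi_ball _ one_pos, ← ENNReal.ofReal_mul (abs_nonneg _), Fintype.card_fin, mul_one]
  have hfin := (hvol _ hT (Set.subset_preimage_image φ K)).trans hle
  rw [hF, hKvol, ← ENNReal.ofReal_mul (Finset.prod_nonneg fun i _ => (hpos i).le),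
    ENNReal.ofReal_le_ofReal_iff (abs_nonneg _), hMdet, abs_mul, abs_mul,
    abs_of_pos (show (0:ℝ) < 2 ^ n by positivity)] at hfin
  have hc : 0 < |C.det| * 2 ^ n := by positivity
  refine le_of_mul_le_mul_right ?_ hc
  linarith

/-- Minkowski's second theorem for the `ℓ∞`-norm. -/
theorem minkowski_second_linf
    (n : ℕ) (hn : 0 < n) (A : Matrix (Fin n) (Fin n) ℝ) (hA : IsUnit A.det) :
    (∏ i : Fin n, succMin n A (i + 1)) ≤ |A.det| ∧
      succMin n A 1 ≤ |A.det| ^ ((1 : ℝ) / n) := by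
  have h1 : (∏ i : Fin n, succMin n A (i + 1)) ≤ |A.det| := by
    by_cases h : ∀ i : Fin n, 0 < succMin n A (i + 1)
    · exact prod_le n A hA h
    · push Not at h
      obtain ⟨i, hi⟩ := h
      rw [Finset.prod_eq_zero (Finset.mem_univ i) (le_antisymm hi (succMin_nonneg _ _ _))]
      exact abs_nonneg _
  refine ⟨h1, ?_⟩
  have h2 : succMin n A 1 ^ n ≤ |A.det| := by
    refine le_trans ?_ h1
    have : succMin n A 1 ^ n = ∏ i : Fin n, succMin n A 1 := by simp
    rw [this]
    exact Finset.prod_le_prod (fun i _ => succMin_nonneg _ _ _)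
      fun i _ => succMin_mono n A hA _ _ (by omega) (by omega)
  calc succMin n A 1 = (succMin n A 1 ^ n) ^ ((1 : ℝ) / n) := by
        rw [one_div, Real.pow_rpow_inv_natCast (succMin_nonneg _ _ _) hn.ne']
    _ ≤ |A.det| ^ ((1 : ℝ) / n) :=
        Real.rpow_le_rpow (pow_nonneg (succMin_nonneg _ _ _) _) h2 (by positivity)
end

section
/- Assume the subspace theorem in the form: for real algebraic $\beta_1,\dots,\beta_n$ with $\{1,\beta_1,\dots,\beta_n\}$ $\mathbb{Q}$-linearly independent and any $\delta > 0$, only finitely many positive integers $q$ satisfy $q^{1+\delta}\prod_{i=1}^n \mathrm{dist}_{\mathbb{Z}}(q\beta_i) < 1$. Then for all positive integers $a_1,\dots,a_n$, there exists a constant $\gamma > 0$ depending only on $a_1,\dots,a_n$ such that for every $x \in \mathbb{Z}^n \setminus \{0\}$ with $E = \sum_{i=1}^n x_i\sqrt{a_i} \neq 0$, one has $|E| \geq \gamma \cdot (n\|x\|_\infty)^{-2n}$. -/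
/-- Distance of a real number to the nearest integer. -/
noncomputable def distZ (x : ℝ) : ℝ := |x - round x|

/-- The `ℓ∞`-norm of an integer vector, as a real number. -/
noncomputable def intNormInf (n : ℕ) (x : Fin n → ℤ) : ℝ :=
  ((Finset.univ.sup fun i => (x i).natAbs : ℕ) : ℝ)

lemma distZ_le (x : ℝ) (p : ℤ) : distZ x ≤ |x - p| := round_le x p

/-- Pigeonhole (transference) step. -/
lemma transfer_pigeonhole {m : ℕ} (β : Fin m → ℝ) (y0 : ℤ) (y : Fin m → ℤ) (i0 : Fin m)
    (hy : y i0 ≠ 0) (hmax : ∀ j, |y j| ≤ |y i0|) (N : ℕ) (hN : 0 < N)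
    (hε : |(y0 : ℝ) + ∑ j, (y j : ℝ) * β j| * (((y i0).natAbs * N ^ (m - 1) : ℕ) : ℝ) ≤ 1 / N) :
    ∃ q : ℕ, 0 < q ∧ q ≤ (y i0).natAbs * N ^ (m - 1) ∧
      (∀ j, j ≠ i0 → distZ (q * β j) ≤ 1 / N) ∧ distZ (q * β i0) ≤ m / N := by
  classical
  set Y := (y i0).natAbs with hY
  have hYpos : 0 < Y := Int.natAbs_pos.mpr hy
  have : NeZero Y := ⟨hYpos.ne'⟩
  have hNR : (0 : ℝ) < N := by exact_mod_cast hN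
  let Q := Y * N ^ (m - 1)
  let f : Fin (Q + 1) → ({j // j ≠ i0} → Fin N) × ZMod Y := fun t =>
    (fun j => ⟨⌊(N : ℝ) * Int.fract ((t : ℕ) * β j)⌋₊, by
        rw [Nat.floor_lt (by positivity)]
        have := Int.fract_lt_one ((t : ℕ) * β j)
        nlinarith⟩,
     ((y0 * (t : ℕ) + ∑ j ∈ Finset.univ.erase i0, y j * ⌊((t : ℕ) : ℝ) * β j⌋ : ℤ) : ZMod Y))
  have hcard : Fintype.card (({j // j ≠ i0} → Fin N) × ZMod Y) < Fintype.card (Fin (Q + 1)) := by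
    rw [Fintype.card_prod, Fintype.card_fun, ZMod.card, Fintype.card_fin, Fintype.card_fin,
      Fintype.card_subtype_compl, Fintype.card_fin, Fintype.card_subtype_eq, mul_comm]
    exact Nat.lt_succ_self _
  obtain ⟨t1, t2, hne, hf⟩ := Fintype.exists_ne_map_eq_of_card_lt f hcard
  wlog hlt : t2 < t1 generalizing t1 t2
  · exact this t2 t1 hne.symm hf.symm (lt_of_le_of_ne (not_lt.mp hlt) hne)
  have hlt' : (t2 : ℕ) < t1 := hlt
  have hqcast : (((t1 : ℕ) - (t2 : ℕ) : ℕ) : ℝ) = (t1 : ℕ) - (t2 : ℕ) := by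
    push_cast [hlt'.le]; rfl
  have hqcastZ : (((t1 : ℕ) - (t2 : ℕ) : ℕ) : ℤ) = (t1 : ℕ) - (t2 : ℕ) := by
    push_cast [hlt'.le]; rfl
  set q : ℕ := (t1 : ℕ) - (t2 : ℕ) with hq
  have hqQ : q ≤ Q := by have := t1.2; omega
  let p : Fin m → ℤ := fun j => ⌊((t1 : ℕ) : ℝ) * β j⌋ - ⌊((t2 : ℕ) : ℝ) * β j⌋
  have hclose : ∀ j, j ≠ i0 → |(q : ℝ) * β j - p j| ≤ 1 / N := by
    intro j hj
    have h1 := congrFun (congrArg Prod.fst hf) ⟨j, hj⟩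
    have h2 : ⌊(N : ℝ) * Int.fract (((t1 : ℕ) : ℝ) * β j)⌋₊ =
        ⌊(N : ℝ) * Int.fract (((t2 : ℕ) : ℝ) * β j)⌋₊ := congrArg Fin.val h1
    have e1 : (q : ℝ) * β j - p j =
        Int.fract (((t1 : ℕ) : ℝ) * β j) - Int.fract (((t2 : ℕ) : ℝ) * β j) := by
      simp only [p, Int.fract, hqcast]; push_cast; ring
    rw [e1]
    set u := Int.fract (((t1 : ℕ) : ℝ) * β j) with hu
    set v := Int.fract (((t2 : ℕ) : ℝ) * β j) with hv
    have hu0 : 0 ≤ u := Int.fract_nonneg _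
    have hv0 : 0 ≤ v := Int.fract_nonneg _
    have a1 := Nat.floor_le (mul_nonneg hNR.le hu0)
    have a2 := Nat.floor_le (mul_nonneg hNR.le hv0)
    have a3 := Nat.lt_floor_add_one ((N : ℝ) * u)
    have a4 := Nat.lt_floor_add_one ((N : ℝ) * v)
    rw [h2] at a1 a3
    have hNa : |(N : ℝ)| = N := abs_of_pos hNR
    rw [le_div_iff₀ hNR]
    nth_rewrite 1 [← hNa]
    rw [← abs_mul, abs_le]
    constructor <;> nlinarith
  have hdvd : (y i0) ∣ (y0 * q + ∑ j ∈ Finset.univ.erase i0, y j * p j) := by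
    have h1 := congrArg Prod.snd hf
    have h2 := (ZMod.intCast_eq_intCast_iff_dvd_sub _ _ _).mp h1.symm
    rw [hY, Int.natAbs_dvd] at h2
    convert h2 using 1
    simp only [p, mul_sub, Finset.sum_sub_distrib]
    rw [hqcastZ]; ring
  obtain ⟨r, hr⟩ := hdvd
  refine ⟨q, by omega, hqQ, fun j hj => (distZ_le _ (p j)).trans (hclose j hj), ?_⟩
  refine (distZ_le _ (-r)).trans ?_
  have hrR : (y0 : ℝ) * q + ∑ j ∈ Finset.univ.erase i0, (y j : ℝ) * p j = y i0 * r := by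
    exact_mod_cast hr
  set e := (y0 : ℝ) + ∑ j, (y j : ℝ) * β j with he
  have hYR : |(y i0 : ℝ)| = Y := by rw [hY, Nat.cast_natAbs]; push_cast; rfl
  have hYR1 : (1 : ℝ) ≤ Y := by exact_mod_cast hYpos
  have hid : (y i0 : ℝ) * (q * β i0 - ((-r : ℤ) : ℝ)) =
      q * e - ∑ j ∈ Finset.univ.erase i0, (y j : ℝ) * (q * β j - p j) := by
    rw [he, ← Finset.add_sum_erase Finset.univ _ (Finset.mem_univ i0)]
    simp only [mul_sub, Finset.sum_sub_distrib, mul_add, Finset.mul_sum]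
    have e2 : ∑ j ∈ Finset.univ.erase i0, (y j : ℝ) * (q * β j) =
      ∑ j ∈ Finset.univ.erase i0, (q : ℝ) * (y j * β j) :=
      Finset.sum_congr rfl fun j _ => by ring
    rw [e2]; push_cast; linarith
  have hsum : |∑ j ∈ Finset.univ.erase i0, (y j : ℝ) * (q * β j - p j)| ≤
      (m - 1) * (Y * (1 / N)) := by
    refine (Finset.abs_sum_le_sum_abs _ _).trans ?_
    have hc : ((Finset.univ.erase i0).card : ℝ) = m - 1 := by
      rw [Finset.card_erase_of_mem (Finset.mem_univ _), Finset.card_fin]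
      have := i0.pos
      push_cast [Nat.one_le_iff_ne_zero.mpr this.ne']; rfl
    rw [← hc, ← nsmul_eq_mul]
    refine Finset.sum_le_card_nsmul _ _ _ fun j hj => ?_
    rw [abs_mul]
    have hj' : |(y j : ℝ)| ≤ Y := by rw [← hYR]; exact_mod_cast hmax j
    exact mul_le_mul hj' (hclose j (Finset.ne_of_mem_erase hj)) (abs_nonneg _) (by positivity)
  have hqe : |(q : ℝ) * e| ≤ 1 / N := by
    rw [abs_mul, abs_of_nonneg (by positivity : (0:ℝ) ≤ q), mul_comm]
    refine le_trans (mul_le_mul_of_nonneg_left ?_ (abs_nonneg _)) hε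
    exact_mod_cast hqQ
  have hfin : (Y : ℝ) * |q * β i0 - ((-r : ℤ) : ℝ)| ≤ Y * (m / N) := by
    rw [← hYR, ← abs_mul, hid, hYR]
    refine (abs_sub _ _).trans ?_
    have : (1 : ℝ) / N ≤ Y * (1 / N) := le_mul_of_one_le_left (by positivity) hYR1
    have e3 : (Y : ℝ) * (m / N) = Y * (1 / N) + (m - 1) * (Y * (1 / N)) := by ring
    rw [e3]; linarith
  exact le_of_mul_le_mul_left hfin (by linarith)

lemma distZ_pos_of_li {m : ℕ} (β : Fin m → ℝ)
    (hli : LinearIndependent ℚ (Fin.cons 1 β : Fin (m + 1) → ℝ)) (q : ℕ) (hq : 0 < q)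
    (j : Fin m) : 0 < distZ (q * β j) := by
  rw [distZ, abs_pos]
  intro h
  have hp := Fintype.linearIndependent_iff.mp hli
    (Fin.cons (-(round ((q : ℝ) * β j) : ℚ)) (fun i => if i = j then (q : ℚ) else 0)) (by
      rw [Fin.sum_univ_succ]
      simp only [Fin.cons_zero, Fin.cons_succ, Rat.smul_def, mul_one]
      rw [Finset.sum_eq_single j]
      · simp only [if_true]; push_cast; linarith
      · intro b _ hb; simp [hb]
      · simp) j.succ
  simp at hp
  omega

lemma linear_form_bound
    (subspace : ∀ (m : ℕ) (β : Fin m → ℝ), (∀ i, IsAlgebraic ℚ (β i)) →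
      LinearIndependent ℚ (Fin.cons 1 β : Fin (m + 1) → ℝ) →
      ∀ δ : ℝ, 0 < δ →
        {q : ℕ | 0 < q ∧ (q : ℝ) ^ (1 + δ) * ∏ i, distZ ((q : ℝ) * β i) < 1}.Finite)
    (m : ℕ) (β : Fin m → ℝ) (halg : ∀ i, IsAlgebraic ℚ (β i))
    (hli : LinearIndependent ℚ (Fin.cons 1 β : Fin (m + 1) → ℝ)) :
    ∃ c : ℝ, 0 < c ∧ c ≤ 1 ∧ ∀ (y0 : ℤ) (y : Fin m → ℤ) (B : ℝ), 1 ≤ B →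
      (∀ j, |(y j : ℝ)| ≤ B) → (y0 : ℝ) + ∑ j, (y j : ℝ) * β j ≠ 0 →
      c / B ^ (2 * m + 1) ≤ |(y0 : ℝ) + ∑ j, (y j : ℝ) * β j| := by
  classical
  have hfin := subspace m β halg hli (1 / (4 * m + 1)) (by positivity)
  obtain ⟨κ, hκ, hκF⟩ : ∃ κ : ℝ, 0 < κ ∧ ∀ q ∈ hfin.toFinset, ∀ j, κ ≤ distZ ((q : ℝ) * β j) := by
    let S : Finset ℝ := insert 1 ((hfin.toFinset ×ˢ Finset.univ).image
      fun z : ℕ × Fin m => distZ ((z.1 : ℝ) * β z.2))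
    have hS : S.Nonempty := Finset.insert_nonempty _ _
    refine ⟨S.min' hS, ?_, fun q hq j => Finset.min'_le _ _ ?_⟩
    · rw [Finset.lt_min'_iff]
      intro s hs
      rcases Finset.mem_insert.mp hs with rfl | hs
      · exact one_pos
      · obtain ⟨z, hz, rfl⟩ := Finset.mem_image.mp hs
        have := (Finset.mem_product.mp hz).1
        rw [Set.Finite.mem_toFinset] at this
        exact distZ_pos_of_li β hli _ this.1 _
    · refine Finset.mem_insert_of_mem (Finset.mem_image.mpr ⟨(q, j), ?_, rfl⟩)
      exact Finset.mem_product.mpr ⟨hq, Finset.mem_univ _⟩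
  obtain ⟨K, hK⟩ := exists_nat_gt (max (m / κ) ((m : ℝ) ^ 2 + 1))
  have hK1 : (m : ℝ) < K * κ := by
    have := (le_max_left _ _).trans_lt hK
    rwa [div_lt_iff₀ hκ] at this
  have hK2 : (m : ℝ) ^ 2 + 1 < K := (le_max_right _ _).trans_lt hK
  have hKone : (1 : ℝ) ≤ K := by nlinarith [sq_nonneg (m : ℝ)]
  have hKpos : 0 < K := by exact_mod_cast (by linarith : (0 : ℝ) < K)
  refine ⟨1 / (K : ℝ) ^ m, by positivity, ?_, ?_⟩
  · rw [div_le_one (by positivity)]; exact one_le_pow₀ hKone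
  intro y0 y B hB hyB hne
  by_cases hy : ∀ j, y j = 0
  · have hy0 : y0 ≠ 0 := by
      rintro rfl; apply hne; simp [hy]
    have h1 : (1 : ℝ) ≤ |(y0 : ℝ)| := by exact_mod_cast Int.one_le_abs hy0
    simp only [hy, Int.cast_zero, zero_mul, Finset.sum_const_zero, add_zero]
    refine le_trans ?_ h1
    rw [div_div, div_le_one (by positivity)]
    exact one_le_mul_of_one_le_of_one_le (one_le_pow₀ hKone) (one_le_pow₀ hB)
  · push Not at hy
    obtain ⟨j0, hj0⟩ := hy
    obtain ⟨i0, -, hi0⟩ := Finset.exists_max_image Finset.univ (fun j => |y j|) ⟨j0, Finset.mem_univ _⟩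
    have hmax : ∀ j, |y j| ≤ |y i0| := fun j => hi0 j (Finset.mem_univ _)
    have hyi : y i0 ≠ 0 := by
      have := (abs_pos.mpr hj0).trans_le (hmax j0)
      exact abs_pos.mp this
    have hm : 0 < m := i0.pos
    by_contra hcon
    push Not at hcon
    set e := (y0 : ℝ) + ∑ j, (y j : ℝ) * β j with he
    set Y := (y i0).natAbs with hY
    have hYpos : 0 < Y := Int.natAbs_pos.mpr hyi
    have hYR : |(y i0 : ℝ)| = Y := by rw [hY, Nat.cast_natAbs]; push_cast; rfl
    have hYR1 : (1 : ℝ) ≤ Y := by exact_mod_cast hYpos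
    have hYB : (Y : ℝ) ≤ B := hYR ▸ hyB i0
    have hNpos : 0 < K * Y ^ 2 := by positivity
    obtain ⟨k, rfl⟩ : ∃ k, m = k + 1 := ⟨m - 1, by omega⟩
    have hε : |e| * ((Y * (K * Y ^ 2) ^ (k + 1 - 1) : ℕ) : ℝ) ≤ 1 / ((K * Y ^ 2 : ℕ) : ℝ) := by
      have h1 : |e| ≤ 1 / (K : ℝ) ^ (k + 1) / (Y : ℝ) ^ (2 * (k + 1) + 1) := by
        refine hcon.le.trans ?_
        gcongr
      rw [le_div_iff₀ (by positivity)]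
      rw [div_div, le_div_iff₀ (by positivity)] at h1
      refine le_trans (le_of_eq ?_) h1
      push_cast [Nat.add_sub_cancel]
      ring
    obtain ⟨q, hq0, hqQ, hqj, hqi⟩ := transfer_pigeonhole β y0 y i0 hyi hmax (K * Y ^ 2) hNpos hε
    rw [Nat.add_sub_cancel] at hqQ
    have hKY : (0 : ℝ) < K * Y := by positivity
    have hprod : ∏ i, distZ ((q : ℝ) * β i) ≤
        ((k + 1 : ℕ) : ℝ) / ((K * Y ^ 2 : ℕ) : ℝ) * (1 / ((K * Y ^ 2 : ℕ) : ℝ)) ^ k := by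
      rw [← Finset.mul_prod_erase Finset.univ _ (Finset.mem_univ i0)]
      refine mul_le_mul hqi ?_ (Finset.prod_nonneg fun _ _ => abs_nonneg _) (by positivity)
      refine (Finset.prod_le_prod (fun _ _ => abs_nonneg _)
        (fun j hj => hqj j (Finset.ne_of_mem_erase hj))).trans ?_
      rw [Finset.prod_const, Finset.card_erase_of_mem (Finset.mem_univ _), Finset.card_fin,
        Nat.add_sub_cancel]
    have hqR : (q : ℝ) ≤ Y * (K * Y ^ 2) ^ k := by exact_mod_cast hqQ
    have hq0R : (0 : ℝ) < q := by exact_mod_cast hq0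
    have hKY1 : (1 : ℝ) ≤ K * Y := one_le_mul_of_one_le_of_one_le hKone hYR1
    have hqKY : (q : ℝ) ≤ (K * Y : ℝ) ^ (2 * k + 1) := by
      refine hqR.trans ?_
      have : (K * Y : ℝ) ^ (2 * k + 1) = (Y * (K * Y ^ 2) ^ k) * K ^ (k + 1) := by ring
      rw [this]
      exact le_mul_of_one_le_right (by positivity) (one_le_pow₀ hKone)
    have hpow : (q : ℝ) ^ (1 / (4 * ((k + 1 : ℕ) : ℝ) + 1)) ≤ Real.sqrt (K * Y) := by
      refine (Real.rpow_le_rpow hq0R.le hqKY (by positivity)).trans ?_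
      rw [← Real.rpow_natCast, ← Real.rpow_mul hKY.le, Real.sqrt_eq_rpow]
      refine Real.rpow_le_rpow_of_exponent_le hKY1 ?_
      rw [mul_one_div, div_le_div_iff₀ (by positivity) (by positivity)]
      push_cast; linarith
    have hmem : q ∈ hfin.toFinset := by
      rw [Set.Finite.mem_toFinset]
      refine ⟨hq0, ?_⟩
      rw [Real.rpow_add hq0R, Real.rpow_one]
      calc (q : ℝ) * (q : ℝ) ^ (1 / (4 * ((k + 1 : ℕ) : ℝ) + 1)) * ∏ i, distZ ((q : ℝ) * β i)
          ≤ (Y * (K * Y ^ 2) ^ k) * Real.sqrt (K * Y) *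
            (((k + 1 : ℕ) : ℝ) / ((K * Y ^ 2 : ℕ) : ℝ) * (1 / ((K * Y ^ 2 : ℕ) : ℝ)) ^ k) := by
            gcongr
            exact Finset.prod_nonneg fun _ _ => abs_nonneg _
        _ = ((k + 1 : ℕ) : ℝ) * Real.sqrt (K * Y) / (K * Y) := by
            push_cast
            rw [one_div, inv_pow]
            field_simp
        _ < 1 := by
            rw [div_lt_one hKY]
            have hs := Real.mul_self_sqrt hKY.le
            have hs0 := Real.sqrt_pos.mpr hKY
            have : ((k + 1 : ℕ) : ℝ) < Real.sqrt (K * Y) := by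
              refine Real.lt_sqrt_of_sq_lt ?_
              nlinarith
            nlinarith
    have h1 := hκF q hmem i0
    have h2 := h1.trans hqi
    rw [le_div_iff₀ (by positivity)] at h2
    push_cast at h2 hK1
    have : (K : ℝ) * κ ≤ κ * (K * Y ^ 2) := by
      have : (1 : ℝ) ≤ (Y : ℝ) ^ 2 := one_le_pow₀ hYR1
      nlinarith [mul_pos hκ (by linarith : (0 : ℝ) < K)]
    linarith

/-- Reduction of a finite spanning family to a linearly independent one with integer coordinates. -/
lemma reduce_family {n : ℕ} (hn : 0 < n) (v : Fin n → ℝ) (hv : ∀ i, v i ≠ 0) :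
    ∃ (m : ℕ) (f : Fin (m + 1) → Fin n) (D : ℕ) (r : Fin n → Fin (m + 1) → ℤ),
      m + 1 ≤ n ∧ 0 < D ∧ LinearIndependent ℚ (v ∘ f) ∧
      ∀ i, (D : ℝ) * v i = ∑ j, (r i j : ℝ) * v (f j) := by
  classical
  obtain ⟨ι, g, hg, hspan, hli⟩ := exists_linearIndependent' ℚ v
  have : Fintype ι := Fintype.ofInjective g hg
  have hcard : Fintype.card ι ≤ n := by simpa using Fintype.card_le_of_injective g hg
  have hne : 0 < Fintype.card ι := by
    rw [Fintype.card_pos_iff]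
    by_contra h
    rw [not_nonempty_iff] at h
    have h1 : v ⟨0, hn⟩ ∈ Submodule.span ℚ (Set.range v) := Submodule.subset_span ⟨_, rfl⟩
    rw [← hspan, Set.range_eq_empty, Submodule.span_empty, Submodule.mem_bot] at h1
    exact hv _ h1
  obtain ⟨m, hm⟩ : ∃ m, Fintype.card ι = m + 1 := ⟨Fintype.card ι - 1, by omega⟩
  let eqv : Fin (m + 1) ≃ ι := (Fintype.equivFinOfCardEq hm).symm
  have hspan' : Submodule.span ℚ (Set.range (v ∘ g ∘ eqv)) = Submodule.span ℚ (Set.range v) := by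
    rw [← hspan, ← Function.comp_assoc, Set.range_comp, eqv.range_eq_univ, Set.image_univ]
  have hco : ∀ i, ∃ c : Fin (m + 1) → ℚ, ∑ j, c j • (v ∘ g ∘ eqv) j = v i := by
    intro i
    have h1 : v i ∈ Submodule.span ℚ (Set.range v) := Submodule.subset_span ⟨_, rfl⟩
    rw [← hspan', Submodule.mem_span_range_iff_exists_fun] at h1
    exact h1
  choose c hc using hco
  let D : ℕ := ∏ i, ∏ j, (c i j).den
  have hdvd : ∀ i j, (c i j).den ∣ D := fun i j =>
    (Finset.dvd_prod_of_mem (fun j => (c i j).den) (Finset.mem_univ j)).trans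
      (Finset.dvd_prod_of_mem (fun i => ∏ j, (c i j).den) (Finset.mem_univ i))
  have hzz : ∀ i j, ∃ z : ℤ, (z : ℚ) = D * c i j := by
    intro i j
    obtain ⟨k, hk⟩ := hdvd i j
    refine ⟨k * (c i j).num, ?_⟩
    rw [hk]
    push_cast
    have := Rat.mul_den_eq_num (c i j)
    rw [← this]; ring
  choose r hr using hzz
  refine ⟨m, g ∘ eqv, D, r, by omega, ?_, ?_, ?_⟩
  · exact Finset.prod_pos fun i _ => Finset.prod_pos fun j _ => (c i j).den_pos
  · rw [← Function.comp_assoc]; exact hli.comp _ eqv.injective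
  · intro i
    rw [← hc i, Finset.mul_sum]
    refine Finset.sum_congr rfl fun j _ => ?_
    have : ((r i j : ℚ) : ℝ) = ((D * c i j : ℚ) : ℝ) := by rw [hr]
    push_cast at this
    rw [this, Rat.smul_def]
    simp only [Function.comp]; ring

/-- Main theorem: assuming the subspace theorem, sums of square roots admit a
separation bound that is singly exponential in `n` for fixed radicands. -/
theorem separation_bound_from_subspace_theorem
    (subspace : ∀ (m : ℕ) (β : Fin m → ℝ), (∀ i, IsAlgebraic ℚ (β i)) →
      LinearIndependent ℚ (Fin.cons 1 β : Fin (m + 1) → ℝ) →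
      ∀ δ : ℝ, 0 < δ →
        {q : ℕ | 0 < q ∧ (q : ℝ) ^ (1 + δ) * ∏ i, distZ ((q : ℝ) * β i) < 1}.Finite)
    (n : ℕ) (a : Fin n → ℕ) (ha : ∀ i, 0 < a i) :
    ∃ γ : ℝ, 0 < γ ∧ ∀ x : Fin n → ℤ, x ≠ 0 →
      (∑ i, (x i : ℝ) * Real.sqrt (a i)) ≠ 0 →
      γ / ((n : ℝ) * intNormInf n x) ^ (2 * n) ≤
        |∑ i, (x i : ℝ) * Real.sqrt (a i)| := by
  classical
  rcases Nat.eq_zero_or_pos n with rfl | hn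
  · exact ⟨1, one_pos, fun x hx => absurd (Subsingleton.elim x 0) hx⟩
  have hv1 : ∀ i, 1 ≤ Real.sqrt (a i) := fun i => by
    rw [Real.one_le_sqrt]; exact_mod_cast ha i
  obtain ⟨m, f, D, r, hmn, hD, hli, hrep⟩ := reduce_family hn (fun i => Real.sqrt (a i))
    (fun i => (lt_of_lt_of_le one_pos (hv1 i)).ne')
  set w : Fin (m + 1) → ℝ := fun j => Real.sqrt (a (f j)) with hw
  have hw0 : 1 ≤ w 0 := hv1 _
  have hw0' : w 0 ≠ 0 := by linarith
  let β : Fin m → ℝ := fun j => w j.succ * (w 0)⁻¹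
  have hcons : (Fin.cons 1 β : Fin (m + 1) → ℝ) = fun j => w j * (w 0)⁻¹ := by
    funext j
    refine Fin.cases ?_ (fun j => ?_) j
    · simp [hw0']
    · simp [β]
  have hliβ : LinearIndependent ℚ (Fin.cons 1 β : Fin (m + 1) → ℝ) := by
    rw [hcons]
    refine hli.map' (LinearMap.mulRight ℚ (w 0)⁻¹) ?_
    rw [LinearMap.ker_eq_bot]
    exact mul_left_injective₀ (inv_ne_zero hw0')
  have halgw : ∀ j, IsAlgebraic ℚ (w j) := by
    intro j
    refine IsAlgebraic.of_pow (n := 2) (by norm_num) ?_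
    rw [hw, Real.sq_sqrt (Nat.cast_nonneg _)]
    exact isAlgebraic_natCast _
  obtain ⟨c, hc0, hc1, hc⟩ := linear_form_bound subspace m β
    (fun j => (halgw _).mul (halgw 0).inv) hliβ
  let C : ℝ := 1 + ∑ i, ∑ j, |(r i j : ℝ)|
  have hC1 : 1 ≤ C := le_add_of_nonneg_right (by positivity)
  have hDR : (0 : ℝ) < D := by exact_mod_cast hD
  refine ⟨c / (D * C ^ (2 * m + 1)), by positivity, fun x hx hE => ?_⟩
  set X := intNormInf n x with hX
  have hxX : ∀ i, |(x i : ℝ)| ≤ X := by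
    intro i
    have h1 : (x i).natAbs ≤ Finset.univ.sup fun i => (x i).natAbs :=
      Finset.le_sup (f := fun i => (x i).natAbs) (Finset.mem_univ i)
    have h2 : |(x i : ℝ)| = ((x i).natAbs : ℝ) := by rw [Nat.cast_natAbs]; push_cast; rfl
    rw [h2, hX, intNormInf]
    exact_mod_cast h1
  have hX1 : 1 ≤ X := by
    obtain ⟨i, hi⟩ := Function.ne_iff.mp hx
    refine le_trans ?_ (hxX i)
    exact_mod_cast Int.one_le_abs hi
  let y : Fin (m + 1) → ℤ := fun j => ∑ i, x i * r i j
  have hyB : ∀ j, |(y j : ℝ)| ≤ C * X := by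
    intro j
    simp only [y]
    push_cast
    refine (Finset.abs_sum_le_sum_abs _ _).trans ?_
    have h1 : ∑ i, |(r i j : ℝ)| ≤ C := by
      have : ∑ i, |(r i j : ℝ)| ≤ ∑ i, ∑ j, |(r i j : ℝ)| :=
        Finset.sum_le_sum fun i _ => Finset.single_le_sum (f := fun j => |(r i j : ℝ)|)
          (fun _ _ => abs_nonneg _) (Finset.mem_univ j)
      simp only [C]; linarith
    refine le_trans ?_ (mul_le_mul_of_nonneg_right h1 (by linarith))
    rw [Finset.sum_mul]
    refine Finset.sum_le_sum fun i _ => ?_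
    rw [abs_mul, mul_comm]
    exact mul_le_mul_of_nonneg_left (hxX i) (abs_nonneg _)
  set E := ∑ i, (x i : ℝ) * Real.sqrt (a i) with hEdef
  have hDE : (D : ℝ) * E = ∑ j, (y j : ℝ) * w j := by
    simp only [y, hEdef, Finset.mul_sum]
    push_cast
    simp only [Finset.sum_mul]
    rw [Finset.sum_comm]
    refine Finset.sum_congr rfl fun i _ => ?_
    have := hrep i
    rw [mul_left_comm, this, Finset.mul_sum]
    refine Finset.sum_congr rfl fun j _ => ?_
    ring
  have hDE2 : (D : ℝ) * E = w 0 * ((y 0 : ℝ) + ∑ j : Fin m, (y j.succ : ℝ) * β j) := by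
    rw [hDE, Fin.sum_univ_succ, mul_add, Finset.mul_sum, mul_comm (w 0)]
    congr 1
    refine Finset.sum_congr rfl fun j _ => ?_
    simp only [β]; field_simp
  have hne : (y 0 : ℝ) + ∑ j : Fin m, (y j.succ : ℝ) * β j ≠ 0 := by
    intro h
    rw [h, mul_zero] at hDE2
    exact hE ((mul_eq_zero.mp hDE2).resolve_left hDR.ne')
  have hCX : 1 ≤ C * X := one_le_mul_of_one_le_of_one_le hC1 hX1
  have hb := hc (y 0) (fun j => y j.succ) (C * X) hCX (fun j => hyB _) hne
  have hb2 : c / (C * X) ^ (2 * m + 1) ≤ D * |E| := by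
    rw [← abs_of_pos hDR, ← abs_mul, hDE2, abs_mul, abs_of_pos (by linarith : 0 < w 0)]
    exact hb.trans (le_mul_of_one_le_left (abs_nonneg _) hw0)
  have hnR : (1 : ℝ) ≤ n := by exact_mod_cast hn
  have hpw : X ^ (2 * m + 1) ≤ ((n : ℝ) * X) ^ (2 * n) := by
    calc X ^ (2 * m + 1) ≤ X ^ (2 * n) := pow_le_pow_right₀ hX1 (by omega)
      _ ≤ ((n : ℝ) * X) ^ (2 * n) := by
        gcongr
        exact le_mul_of_one_le_left (by linarith) hnR
  calc c / (D * C ^ (2 * m + 1)) / ((n : ℝ) * X) ^ (2 * n)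
      ≤ c / (D * C ^ (2 * m + 1)) / X ^ (2 * m + 1) := by gcongr
    _ = c / (C * X) ^ (2 * m + 1) / D := by rw [mul_pow, div_div, div_div]; congr 1; ring
    _ ≤ |E| := by rw [div_le_iff₀ hDR, mul_comm |E|]; exact hb2
end
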